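/- Let m ≥ 1 and let C : ℤ^m → [0,∞) satisfy: (i) C is even and C(x) = 0 iff x = 0; (ii) C(x) ≤ C(y) whenever x ⪯ y; (iii') there exists a monotone norm ∥·∥⋆ on ℝ^m such that C(x)/∥x∥⋆ ≤ C(x')/∥x'∥⋆ for all nonzero x', x ∈ ℤ^m with x' ⪯ x. Then for all positive integers N_1, …, N_m with N := N_1 + … + N_m, there exists a monotone norm ∥·∥ on ℝ^N satisfying the compatibility equation for C. -/

import Mathlib

/-- `f` is a norm on the real vector space `E`. -/
def IsNorm {E : Type*} [AddCommGroup E] [Module ℝ E] (f : E → ℝ) : Prop :=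
  (∀ x, 0 ≤ f x) ∧ (∀ x, f x = 0 ↔ x = 0) ∧
    (∀ x y, f (x + y) ≤ f x + f y) ∧ ∀ (c : ℝ) (x : E), f (c • x) = |c| * f x

/-- The partial order `x ⪯ y` on real vectors. -/
def PreOrd {ι : Type*} (x y : ι → ℝ) : Prop :=
  ∀ j, |x j| ≤ |y j| ∧ 0 ≤ x j * y j

/-- The partial order `x ⪯ y` on integer vectors. -/
def PreOrdInt {ι : Type*} (x y : ι → ℤ) : Prop :=
  ∀ j, |x j| ≤ |y j| ∧ 0 ≤ x j * y j

/-- The compatibility equation between a multi-material cost `C : ℤ^m → ℝ` and a norm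
`nrm` on `ℝ^N`, where `N = N_1 + ⋯ + N_m` and `{1, …, N}` is partitioned into blocks
`B_1, …, B_m` of sizes `N_1, …, N_m` (realized here as the sigma type
`Σ i, Fin (N i)`): for every `θ ∈ ℤ^m` with `|θ_i| ≤ N_i` and every choice of subsets
`K_i ⊆ B_i` with `#K_i = |θ_i|`, one has
`C θ = ∥∑_{i=1}^m sign(θ_i) ∑_{j ∈ K_i} e_j∥`. -/
def CompatEq (m : ℕ) (N : Fin m → ℕ) (C : (Fin m → ℤ) → ℝ)
    (nrm : ((Σ i : Fin m, Fin (N i)) → ℝ) → ℝ) : Prop :=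
  ∀ θ : Fin m → ℤ, (∀ i, (θ i).natAbs ≤ N i) →
    ∀ K : (i : Fin m) → Finset (Fin (N i)), (∀ i, (K i).card = (θ i).natAbs) →
      C θ = nrm fun j => ((θ j.1).sign : ℝ) * (if j.2 ∈ K j.1 then 1 else 0)

/-!
Write `C θ = c θ * ‖θ‖⋆`: condition (iii') says that `c` is antitone off `0` and (ii) that the
product is monotone. A signed subset of the blocks is a sign `σ i` and a subset `K i` of each block;
restricting `x` to it, dropping the entries of the wrong sign and summing over blocks gives a vector
`S x` in `ℝ^m`, and `x ↦ c (σ #K) * ‖S x‖⋆` is nonnegative, monotone and sublinear. The norm is the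
maximum of these functionals over all signed subsets. If `x` is itself the indicator of a signed
subset with block counts `θ`, then `S x` is the integer vector `s` counting the common part of the
two signed subsets, so `s ⪯ σ #K` and `s ⪯ θ`, whence
`c (σ #K) * ‖s‖⋆ ≤ c s * ‖s‖⋆ = C s ≤ C θ`, with equality when the two signed subsets coincide.
-/

namespace IsNorm

variable {E : Type*} [AddCommGroup E] [Module ℝ E] {f : E → ℝ}

lemma nonneg (hf : IsNorm f) (x : E) : 0 ≤ f x := hf.1 x

lemma map_zero (hf : IsNorm f) : f 0 = 0 := (hf.2.1 0).2 rfl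

lemma pos (hf : IsNorm f) {x : E} (hx : x ≠ 0) : 0 < f x :=
  (hf.nonneg x).lt_of_ne' (mt (hf.2.1 x).1 hx)

lemma pos_intCast {ι : Type*} {g : (ι → ℝ) → ℝ} (hg : IsNorm g) {θ : ι → ℤ} (hθ : θ ≠ 0) :
    0 < g fun i ↦ (θ i : ℝ) :=
  hg.pos fun h ↦ hθ <| funext fun i ↦ by simpa using congrFun h i

lemma add_le (hf : IsNorm f) (x y : E) : f (x + y) ≤ f x + f y := hf.2.2.1 x y

lemma map_smul_of_nonneg (hf : IsNorm f) {r : ℝ} (hr : 0 ≤ r) (x : E) :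
    f (r • x) = r * f x := by
  rw [hf.2.2.2, abs_of_nonneg hr]

lemma map_neg (hf : IsNorm f) (x : E) : f (-x) = f x := by
  simpa using hf.2.2.2 (-1) x

lemma map_neg_intCast {ι : Type*} {g : (ι → ℝ) → ℝ} (hg : IsNorm g) (θ : ι → ℤ) :
    g (fun i ↦ ((-θ) i : ℝ)) = g fun i ↦ (θ i : ℝ) := by
  simpa [Pi.neg_def] using hg.map_neg fun i ↦ (θ i : ℝ)

end IsNorm

section SupremumNorm

variable {E I : Type*}

lemma iSup_map_neg [InvolutiveNeg E] {f : I → E → ℝ}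
    (hbdd : ∀ x, BddAbove (Set.range fun i ↦ f i x))
    (hneg : ∀ i, ∃ j, ∀ x, f i (-x) ≤ f j x) (x : E) :
    ⨆ i, f i (-x) = ⨆ i, f i x := by
  have hle (y : E) : ⨆ i, f i (-y) ≤ ⨆ i, f i y := by
    rcases isEmpty_or_nonempty I
    · simp
    · refine ciSup_le fun i ↦ ?_
      obtain ⟨j, hj⟩ := hneg i
      exact (hj y).trans (le_ciSup (hbdd y) j)
  exact (hle x).antisymm (by simpa using hle (-x))

lemma iSup_map_add_le [Add E] {f : I → E → ℝ}
    (hbdd : ∀ x, BddAbove (Set.range fun i ↦ f i x))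
    (hadd : ∀ i x y, f i (x + y) ≤ f i x + f i y) (x y : E) :
    ⨆ i, f i (x + y) ≤ (⨆ i, f i x) + ⨆ i, f i y := by
  rcases isEmpty_or_nonempty I
  · simp
  · exact ciSup_le fun i ↦ (hadd i x y).trans
      (add_le_add (le_ciSup (hbdd x) i) (le_ciSup (hbdd y) i))

variable [AddCommGroup E] [Module ℝ E] {f : I → E → ℝ}

lemma iSup_map_smul (hbdd : ∀ x, BddAbove (Set.range fun i ↦ f i x))
    (hneg : ∀ i, ∃ j, ∀ x, f i (-x) ≤ f j x)
    (hsmul : ∀ i (r : ℝ) x, 0 ≤ r → f i (r • x) = r * f i x) (r : ℝ) (x : E) :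
    ⨆ i, f i (r • x) = |r| * ⨆ i, f i x := by
  have habs : ⨆ i, f i (|r| • x) = |r| * ⨆ i, f i x := by
    simp only [hsmul _ _ _ (abs_nonneg r), Real.mul_iSup_of_nonneg (abs_nonneg r)]
  rcases abs_choice r with hr | hr
  · rwa [hr] at habs ⊢
  · rw [← habs, hr, neg_smul, iSup_map_neg hbdd hneg]

lemma isNorm_iSup (hbdd : ∀ x, BddAbove (Set.range fun i ↦ f i x))
    (hneg : ∀ i, ∃ j, ∀ x, f i (-x) ≤ f j x)
    (hsmul : ∀ i (r : ℝ) x, 0 ≤ r → f i (r • x) = r * f i x)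
    (hadd : ∀ i x y, f i (x + y) ≤ f i x + f i y) (hpos : ∀ x ≠ 0, ∃ i, 0 < f i x) :
    IsNorm fun x ↦ ⨆ i, f i x := by
  have hhom := iSup_map_smul hbdd hneg hsmul
  have hzero : ⨆ i, f i 0 = 0 := by simpa using hhom 0 0
  refine ⟨fun x ↦ ?_, fun x ↦ ⟨fun hx ↦ ?_, ?_⟩, iSup_map_add_le hbdd hadd, hhom⟩
  · have hadd_neg := iSup_map_add_le hbdd hadd x (-x)
    rw [add_neg_cancel, hzero, iSup_map_neg hbdd hneg] at hadd_neg
    linarith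
  · by_contra hne
    obtain ⟨i, hi⟩ := hpos x hne
    exact (hi.trans_le (le_ciSup (hbdd x) i)).ne' hx
  · rintro rfl
    exact hzero

end SupremumNorm

section PreOrd

variable {ι : Type*} {x y : ι → ℝ}

lemma preOrd_of_nonneg_of_le (hx : ∀ i, 0 ≤ x i) (hxy : ∀ i, x i ≤ y i) : PreOrd x y :=
  fun i ↦ ⟨abs_le_abs_of_nonneg (hx i) (hxy i), mul_nonneg (hx i) ((hx i).trans (hxy i))⟩

namespace PreOrd

lemma units_smul (h : PreOrd x y) (σ : ι → ℤˣ) :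
    PreOrd (fun i ↦ σ i • x i) (fun i ↦ σ i • y i) := by
  intro i
  rcases Int.units_eq_one_or (σ i) with hi | hi <;> simpa [hi] using h i

lemma posPart_le (h : PreOrd x y) (i : ι) : (x i)⁺ ≤ (y i)⁺ := by
  obtain ⟨habs, hmul⟩ := h i
  rcases le_or_gt (x i) 0 with hx | hx
  · simp [posPart_eq_zero.2 hx]
  · have hy : 0 ≤ y i := nonneg_of_mul_nonneg_right hmul hx
    rwa [posPart_of_nonneg hx.le, posPart_of_nonneg hy, ← abs_of_pos hx, ← abs_of_nonneg hy]

end PreOrd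

lemma PreOrdInt.ne_zero {s t : ι → ℤ} (h : PreOrdInt s t) (hs : s ≠ 0) : t ≠ 0 := by
  rintro rfl
  exact hs (funext fun i ↦ by simpa using (h i).1)

end PreOrd

section SignedSubset

variable {ι : Type*} {κ : ι → Type*}

/-- The signed block counts `σ_i #K_i`, where a cost `C` is evaluated. Throughout, a signed subset
of the blocks `κ i` is encoded by a sign `σ i` and a finite set `K i` for each block. -/
def signedCard (σ : ι → ℤˣ) (K : ∀ i, Finset (κ i)) : ι → ℤ :=
  fun i ↦ σ i • ((K i).card : ℤ)

/-- The vector `∑ i, σ_i ∑_{j ∈ K i} e_j` attached to a signed subset, as in `CompatEq`. -/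
noncomputable def signedIndicator [∀ i, DecidableEq (κ i)] (σ : ι → ℤˣ)
    (K : ∀ i, Finset (κ i)) : (Σ i, κ i) → ℝ :=
  fun j ↦ σ j.1 • if j.2 ∈ K j.1 then 1 else 0

/-- The block sums of `x` over a signed subset, discarding the entries of `x` in block `i` whose
sign is opposite to `σ i`; this is the map carrying `ℝ^N` to `ℝ^m`, where a norm is given. -/
noncomputable def signedPosSum (σ : ι → ℤˣ) (K : ∀ i, Finset (κ i)) (x : (Σ i, κ i) → ℝ) :
    ι → ℝ :=
  fun i ↦ σ i • ∑ j ∈ K i, (σ i • x ⟨i, j⟩)⁺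

/-- The common part of two signed subsets `(σ, K)` and `(τ, L)`: the intersection in the blocks
where the signs agree, and nothing elsewhere. Its block counts lie below those of both. -/
def signedInter [∀ i, DecidableEq (κ i)] (σ τ : ι → ℤˣ) (K L : ∀ i, Finset (κ i)) :
    ∀ i, Finset (κ i) :=
  fun i ↦ if σ i = τ i then K i ∩ L i else ∅

variable (σ τ : ι → ℤˣ) (K L : ∀ i, Finset (κ i))

lemma signedCard_neg : signedCard (-σ) K = -signedCard σ K := by
  funext i
  simp [signedCard]

lemma preOrdInt_signedCard {K L : ∀ i, Finset (κ i)} (h : ∀ i, K i ⊆ L i) :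
    PreOrdInt (signedCard σ K) (signedCard σ L) := by
  intro i
  have hcard := Finset.card_le_card (h i)
  have hmul : (0 : ℤ) ≤ (K i).card * (L i).card := by positivity
  rcases Int.units_eq_one_or (σ i) with hi | hi <;> simp [signedCard, hi, hcard, hmul]

lemma exists_signedCard_eq_and_signedIndicator_eq [∀ i, DecidableEq (κ i)] {θ : ι → ℤ}
    {K : ∀ i, Finset (κ i)} (hK : ∀ i, (K i).card = (θ i).natAbs) :
    ∃ σ : ι → ℤˣ, signedCard σ K = θ ∧
      signedIndicator σ K = fun j ↦ ((θ j.1).sign : ℝ) * if j.2 ∈ K j.1 then 1 else 0 := by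
  have hsign (n : ℤ) : ∃ u : ℤˣ, u • (n.natAbs : ℤ) = n ∧ (n ≠ 0 → (u : ℤ) = n.sign) := by
    rcases lt_trichotomy n 0 with hn | rfl | hn
    · exact ⟨-1, by simp [abs_of_neg hn], fun _ ↦ by simp [Int.sign_eq_neg_one_of_neg hn]⟩
    · exact ⟨1, by simp⟩
    · exact ⟨1, by simp [abs_of_pos hn], fun _ ↦ by simp [Int.sign_eq_one_of_pos hn]⟩
  choose σ hσ hσ' using fun i ↦ hsign (θ i)
  refine ⟨σ, funext fun i ↦ by rw [signedCard, hK, hσ], funext fun ⟨i, j⟩ ↦ ?_⟩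
  by_cases hj : j ∈ K i
  · have hθ : θ i ≠ 0 := by
      rw [← Int.natAbs_pos, ← hK]
      exact Finset.card_pos.2 ⟨j, hj⟩
    simp [signedIndicator, hj, ← hσ' i hθ, Units.smul_def]
  · simp [signedIndicator, hj]

section SignedPosSum

variable (x y : (Σ i, κ i) → ℝ)

lemma signedPosSum_neg : signedPosSum σ K (-x) = -signedPosSum (-σ) K x := by
  funext i
  simp [signedPosSum]

lemma signedPosSum_smul {r : ℝ} (hr : 0 ≤ r) :
    signedPosSum σ K (r • x) = r • signedPosSum σ K x := by
  funext i
  have hterm (j : κ i) : (σ i • (r * x ⟨i, j⟩))⁺ = r * (σ i • x ⟨i, j⟩)⁺ := by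
    rw [← mul_smul_comm, posPart_def, posPart_def, mul_max_of_nonneg _ _ hr, mul_zero]
  simp [signedPosSum, hterm, ← Finset.mul_sum, mul_smul_comm]

lemma signedPosSum_mono {x y : (Σ i, κ i) → ℝ} (h : PreOrd x y) :
    PreOrd (signedPosSum σ K x) (signedPosSum σ K y) :=
  (preOrd_of_nonneg_of_le (fun _ ↦ Finset.sum_nonneg fun _ _ ↦ posPart_nonneg _) fun i ↦
    Finset.sum_le_sum fun j _ ↦ (h.units_smul fun j ↦ σ j.1).posPart_le ⟨i, j⟩).units_smul σ

lemma preOrd_signedPosSum_add :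
    PreOrd (signedPosSum σ K (x + y)) (signedPosSum σ K x + signedPosSum σ K y) := by
  have hsplit : signedPosSum σ K x + signedPosSum σ K y =
      fun i ↦ σ i • ∑ j ∈ K i, ((σ i • x ⟨i, j⟩)⁺ + (σ i • y ⟨i, j⟩)⁺) := by
    funext i
    simp [signedPosSum, Finset.sum_add_distrib]
  rw [hsplit]
  refine (preOrd_of_nonneg_of_le (fun _ ↦ Finset.sum_nonneg fun _ _ ↦ posPart_nonneg _)
    fun i ↦ Finset.sum_le_sum fun j _ ↦ ?_).units_smul σ
  rw [Pi.add_apply, smul_add]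
  exact sup_le (add_le_add (le_posPart _) (le_posPart _))
    (add_nonneg (posPart_nonneg _) (posPart_nonneg _))

lemma exists_signedCard_ne_zero_and_signedPosSum_ne_zero {x : (Σ i, κ i) → ℝ} (hx : x ≠ 0) :
    ∃ (σ : ι → ℤˣ) (K : ∀ i, Finset (κ i)), signedCard σ K ≠ 0 ∧ signedPosSum σ K x ≠ 0 := by
  classical
  obtain ⟨⟨i, j⟩, hij⟩ := Function.ne_iff.1 hx
  obtain ⟨u, hu⟩ : ∃ u : ℤˣ, 0 < u • x ⟨i, j⟩ := by
    rcases hij.lt_or_gt with h | h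
    · exact ⟨-1, by simpa using h⟩
    · exact ⟨1, by simpa using h⟩
  refine ⟨fun _ ↦ u, Function.update (fun _ ↦ ∅) i {j}, ?_, ?_⟩ <;>
    refine Function.ne_iff.2 ⟨i, ?_⟩
  · simp [signedCard, Units.smul_def]
  · simpa [signedPosSum, posPart_of_nonneg hu.le, smul_smul, Int.units_mul_self] using hij

end SignedPosSum

variable [∀ i, DecidableEq (κ i)]

lemma signedInter_self : signedInter σ σ K K = K := by
  funext i
  simp [signedInter]

lemma signedInter_subset_left (i : ι) : signedInter σ τ K L i ⊆ K i := by
  unfold signedInter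
  split_ifs <;> simp

lemma signedInter_subset_right (i : ι) : signedInter σ τ K L i ⊆ L i := by
  unfold signedInter
  split_ifs <;> simp

lemma signedCard_signedInter_congr :
    signedCard σ (signedInter σ τ K L) = signedCard τ (signedInter σ τ K L) := by
  funext i
  by_cases h : σ i = τ i <;> simp [signedCard, signedInter, h]

lemma signedPosSum_signedIndicator :
    signedPosSum σ K (signedIndicator τ L) =
      fun i ↦ (signedCard σ (signedInter σ τ K L) i : ℝ) := by
  funext i
  have hcast (u : ℤˣ) (n : ℕ) : ((u • (n : ℤ) : ℤ) : ℝ) = u • (n : ℝ) := by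
    simp [Units.smul_def]
  rw [signedCard, hcast, signedPosSum]
  congr 1
  by_cases h : σ i = τ i
  · simp [signedInter, signedIndicator, h, smul_smul, Int.units_mul_self, apply_ite]
  · have hterm (j : κ i) : (σ i • signedIndicator τ L ⟨i, j⟩)⁺ = 0 := by
      rw [posPart_eq_zero, Int.units_ne_iff_eq_neg.1 h, signedIndicator]
      split_ifs <;> simp [smul_smul, Int.units_mul_self]
    simp [signedInter, h, hterm]

end SignedSubset

section BlockNorm

variable {ι : Type*} {κ : ι → Type*} {c : (ι → ℤ) → ℝ} {p : (ι → ℝ) → ℝ}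

/-- The largest value at `x` of the functionals `c(σ #K) p(signedPosSum σ K x)` over all signed
subsets `(σ, K)`. Built from a norm `p` on `ℝ^ι` and a weight `c`, it is a norm on `ℝ^N` that
extends the cost `θ ↦ c θ * p θ`. -/
noncomputable def blockNorm (c : (ι → ℤ) → ℝ) (p : (ι → ℝ) → ℝ) (x : (Σ i, κ i) → ℝ) : ℝ :=
  ⨆ q : (ι → ℤˣ) × ∀ i, Finset (κ i), c (signedCard q.1 q.2) * p (signedPosSum q.1 q.2 x)

variable [Finite ι] [∀ i, Finite (κ i)]

lemma le_blockNorm (σ : ι → ℤˣ) (K : ∀ i, Finset (κ i))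
    (x : (Σ i, κ i) → ℝ) : c (signedCard σ K) * p (signedPosSum σ K x) ≤ blockNorm c p x :=
  le_ciSup (f := fun q : (ι → ℤˣ) × ∀ i, Finset (κ i) ↦
    c (signedCard q.1 q.2) * p (signedPosSum q.1 q.2 x)) (Set.finite_range _).bddAbove (σ, K)

lemma blockNorm_mono (hc : ∀ θ, 0 ≤ c θ) (hpmono : ∀ x y, PreOrd x y → p x ≤ p y)
    {x y : (Σ i, κ i) → ℝ} (hxy : PreOrd x y) : blockNorm c p x ≤ blockNorm c p y :=
  ciSup_mono (Set.finite_range _).bddAbove fun q ↦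
    mul_le_mul_of_nonneg_left (hpmono _ _ (signedPosSum_mono q.1 q.2 hxy)) (hc _)

lemma isNorm_blockNorm (hc : ∀ θ, 0 ≤ c θ) (hcpos : ∀ θ ≠ 0, 0 < c θ)
    (hceven : ∀ θ, c (-θ) = c θ) (hp : IsNorm p) (hpmono : ∀ x y, PreOrd x y → p x ≤ p y) :
    IsNorm (blockNorm c p : ((Σ i, κ i) → ℝ) → ℝ) := by
  refine isNorm_iSup (fun _ ↦ (Set.finite_range _).bddAbove)
    (fun ⟨σ, K⟩ ↦ ⟨(-σ, K), fun x ↦ ?_⟩)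
    (fun ⟨σ, K⟩ r x hr ↦ ?_) (fun ⟨σ, K⟩ x y ↦ ?_) fun x hx ↦ ?_
  · rw [signedPosSum_neg, hp.map_neg, signedCard_neg, hceven]
  · rw [signedPosSum_smul σ K x hr, hp.map_smul_of_nonneg hr, mul_left_comm]
  · rw [← mul_add]
    exact mul_le_mul_of_nonneg_left
      ((hpmono _ _ (preOrd_signedPosSum_add σ K x y)).trans (hp.add_le _ _)) (hc _)
  · obtain ⟨σ, K, hcard, hsum⟩ := exists_signedCard_ne_zero_and_signedPosSum_ne_zero hx
    exact ⟨(σ, K), mul_pos (hcpos _ hcard) (hp.pos hsum)⟩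

lemma blockNorm_signedIndicator [∀ i, DecidableEq (κ i)] (hp : IsNorm p)
    (hcanti : ∀ s t : ι → ℤ, s ≠ 0 → t ≠ 0 → PreOrdInt s t → c t ≤ c s)
    (hcmono : ∀ s t : ι → ℤ, PreOrdInt s t →
      c s * p (fun i ↦ (s i : ℝ)) ≤ c t * p (fun i ↦ (t i : ℝ)))
    (τ : ι → ℤˣ) (L : ∀ i, Finset (κ i)) :
    blockNorm c p (signedIndicator τ L) =
      c (signedCard τ L) * p (fun i ↦ (signedCard τ L i : ℝ)) := by
  refine le_antisymm (ciSup_le fun ⟨σ, K⟩ ↦ ?_) ?_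
  · dsimp only
    rw [signedPosSum_signedIndicator]
    set s := signedCard σ (signedInter σ τ K L) with hs
    have hsK : PreOrdInt s (signedCard σ K) :=
      preOrdInt_signedCard σ (signedInter_subset_left σ τ K L)
    have hsL : PreOrdInt s (signedCard τ L) := by
      rw [hs, signedCard_signedInter_congr]
      exact preOrdInt_signedCard τ (signedInter_subset_right σ τ K L)
    calc c (signedCard σ K) * p (fun i ↦ (s i : ℝ))
        ≤ c s * p (fun i ↦ (s i : ℝ)) := by
          by_cases hs0 : s = 0
          · have hcast : (fun i ↦ (s i : ℝ)) = 0 := by simp [hs0, Pi.zero_def]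
            simp [hcast, hp.map_zero]
          · exact mul_le_mul_of_nonneg_right
              (hcanti _ _ hs0 (hsK.ne_zero hs0) hsK) (hp.nonneg _)
      _ ≤ c (signedCard τ L) * p (fun i ↦ (signedCard τ L i : ℝ)) := hcmono _ _ hsL
  · have h := le_blockNorm (c := c) (p := p) τ L (signedIndicator τ L)
    rwa [signedPosSum_signedIndicator, signedInter_self] at h

end BlockNorm

/-- If `C : ℤ^m → [0,∞)` satisfies (i) even and vanishing exactly
at `0`, (ii) monotone with respect to `⪯`, and (iii') sublinear with respect to some
monotone norm `∥·∥⋆` on `ℝ^m`, then for all positive integers `N_1, …, N_m` there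
exists a monotone norm on `ℝ^N` (`N = N_1 + ⋯ + N_m`) satisfying the compatibility
equation for `C`. -/
theorem exists_compatible_monotone_norm {m : ℕ} (hm : 1 ≤ m)
    (C : (Fin m → ℤ) → ℝ)
    (hC0 : ∀ x, 0 ≤ C x)
    (heven : ∀ x, C (-x) = C x)
    (hzero : ∀ x, C x = 0 ↔ x = 0)
    (hmono : ∀ x y, PreOrdInt x y → C x ≤ C y)
    (hsublin : ∃ nrmStar : (Fin m → ℝ) → ℝ, IsNorm nrmStar ∧
      (∀ x y : Fin m → ℝ, PreOrd x y → nrmStar x ≤ nrmStar y) ∧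
      ∀ x x' : Fin m → ℤ, x ≠ 0 → x' ≠ 0 → PreOrdInt x' x →
        C x / nrmStar (fun i => (x i : ℝ)) ≤ C x' / nrmStar (fun i => (x' i : ℝ)))
    (N : Fin m → ℕ) (hN : ∀ i, 0 < N i) :
    ∃ nrm : ((Σ i : Fin m, Fin (N i)) → ℝ) → ℝ,
      IsNorm nrm ∧ (∀ x y, PreOrd x y → nrm x ≤ nrm y) ∧ CompatEq m N C nrm := by
  obtain ⟨p, hp, hpmono, hanti⟩ := hsublin
  let c (θ : Fin m → ℤ) : ℝ := C θ / p fun i ↦ (θ i : ℝ)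
  have hc (θ) : 0 ≤ c θ := div_nonneg (hC0 θ) (hp.nonneg _)
  have hcpos (θ) (hθ : θ ≠ 0) : 0 < c θ :=
    div_pos ((hC0 θ).lt_of_ne' (mt (hzero θ).1 hθ)) (hp.pos_intCast hθ)
  have hceven (θ) : c (-θ) = c θ := by
    simp only [c, heven, hp.map_neg_intCast]
  have hcp (θ) : c θ * p (fun i ↦ (θ i : ℝ)) = C θ :=
    div_mul_cancel_of_imp fun h ↦ (hzero θ).2 <| by_contra fun hθ ↦ (hp.pos_intCast hθ).ne' h
  have hcmono (s t) (hst : PreOrdInt s t) :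
      c s * p (fun i ↦ (s i : ℝ)) ≤ c t * p (fun i ↦ (t i : ℝ)) := by
    simpa only [hcp] using hmono s t hst
  refine ⟨blockNorm c p, isNorm_blockNorm hc hcpos hceven hp hpmono,
    fun x y ↦ blockNorm_mono hc hpmono, fun θ _ K hK ↦ ?_⟩
  obtain ⟨σ, hcard, hind⟩ := exists_signedCard_eq_and_signedIndicator_eq hK
  rw [← hind, blockNorm_signedIndicator hp (fun s t hs ht ↦ hanti t s ht hs) hcmono, hcard, hcp]
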